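/- arXiv:1310.1059 — 2 statements merged into one kernel-verified Lean document; each statement's English description precedes it below -/
import Mathlib

section
/- Let n ≥ 2 and let −L, G be the Dirichlet MAC matrices. Then −L is symmetric positive definite (hence invertible), and every eigenvalue λ of the symmetric n²×n² Schur complement S := Gᵀ·(−L)⁻¹·G satisfies 0 ≤ λ ≤ 1. -/
/-!
A matrix `A > 0` with `G Gᵀ ≤ A` in the Loewner order forces the spectrum of `Gᵀ A⁻¹ G` into `[0, 1]`
(`eigenvalue_schur_mem`), so only `G Gᵀ ≤ -L` has to be checked. Since `T_D = B_Dᵀ B_D` and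
`T_E = B_D B_Dᵀ + 2 E₀` with `E₀ = diag(1, 0, …, 0, 1)`, the Laplacian has a discrete Helmholtz
decomposition `-L = G Gᵀ + Cᵀ C + 2 diag(E₀ ⊗ I, I ⊗ E₀)`, where `C` is the discrete curl
(`negL_eq`): the mixed blocks `± B_D ⊗ B_Dᵀ` of `G Gᵀ` and `Cᵀ C` cancel. The last two summands are
positive semidefinite. Positive definiteness of `-L` comes from that of `T_D`, because `B_D` is
injective.
-/


open Matrix Kronecker

/-- `(n-1)×(n-1)` tridiagonal matrix with `2` on the diagonal and `-1` on the sub/super-diagonal. -/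
noncomputable def TD (n : ℕ) : Matrix (Fin (n - 1)) (Fin (n - 1)) ℝ := fun i j =>
  if i = j then 2 else if (i : ℕ) + 1 = (j : ℕ) ∨ (j : ℕ) + 1 = (i : ℕ) then -1 else 0

/-- `n×n` tridiagonal matrix with diagonal `(3,2,…,2,3)` and `-1` on the sub/super-diagonal. -/
noncomputable def TE (n : ℕ) : Matrix (Fin n) (Fin n) ℝ := fun i j =>
  if i = j then (if (i : ℕ) = 0 ∨ (i : ℕ) = n - 1 then 3 else 2)
  else if (i : ℕ) + 1 = (j : ℕ) ∨ (j : ℕ) + 1 = (i : ℕ) then -1 else 0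

/-- `n×n` diagonal matrix `diag(1,0,…,0,1)`. -/
noncomputable def E0 (n : ℕ) : Matrix (Fin n) (Fin n) ℝ := fun i j =>
  if i = j ∧ ((i : ℕ) = 0 ∨ (i : ℕ) = n - 1) then 1 else 0

/-- `n×(n-1)` bidiagonal matrix with `(B_D)_{i,i} = -1`, `(B_D)_{i+1,i} = 1`. -/
noncomputable def BD (n : ℕ) : Matrix (Fin n) (Fin (n - 1)) ℝ := fun i j =>
  if (i : ℕ) = (j : ℕ) then -1 else if (i : ℕ) = (j : ℕ) + 1 then 1 else 0

/-- Discrete negative vector Laplacian of the Dirichlet MAC discretization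
(`h = 1`, `μ = 1`). -/
noncomputable def negL (n : ℕ) :
    Matrix ((Fin n × Fin (n - 1)) ⊕ (Fin (n - 1) × Fin n))
      ((Fin n × Fin (n - 1)) ⊕ (Fin (n - 1) × Fin n)) ℝ :=
  Matrix.fromBlocks
    ((1 : Matrix (Fin n) (Fin n) ℝ) ⊗ₖ TD n + TE n ⊗ₖ (1 : Matrix (Fin (n - 1)) (Fin (n - 1)) ℝ))
    0 0
    ((1 : Matrix (Fin (n - 1)) (Fin (n - 1)) ℝ) ⊗ₖ TE n + TD n ⊗ₖ (1 : Matrix (Fin n) (Fin n) ℝ))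

/-- Discrete gradient of the Dirichlet MAC discretization: `I_n ⊗ B_Dᵀ` stacked on top of
`B_Dᵀ ⊗ I_n`. -/
noncomputable def Gmac (n : ℕ) :
    Matrix ((Fin n × Fin (n - 1)) ⊕ (Fin (n - 1) × Fin n)) (Fin n × Fin n) ℝ :=
  Matrix.fromRows ((1 : Matrix (Fin n) (Fin n) ℝ) ⊗ₖ (BD n)ᵀ)
    ((BD n)ᵀ ⊗ₖ (1 : Matrix (Fin n) (Fin n) ℝ))

theorem BD_transpose_mul_BD (n : ℕ) : (BD n)ᵀ * BD n = TD n := by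
  ext i j
  have key : ∀ k : Fin n, BD n k i * BD n k j =
      (if k = ⟨i, by omega⟩ then -BD n k j else 0)
        + (if k = ⟨i + 1, by omega⟩ then BD n k j else 0) := by
    intro k
    simp only [BD, Fin.ext_iff]
    split_ifs <;> first | omega | norm_num
  simp only [Matrix.mul_apply, Matrix.transpose_apply, key, Finset.sum_add_distrib,
    Finset.sum_ite_eq', Finset.mem_univ, if_true]
  simp only [BD, TD, Fin.ext_iff]
  split_ifs <;> first | omega | norm_num

theorem TE_eq (n : ℕ) (hn : 2 ≤ n) : TE n = BD n * (BD n)ᵀ + (2 : ℝ) • E0 n := by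
  ext i j
  have key : ∀ k : Fin (n - 1), BD n i k * BD n j k =
      (if (i : ℕ) = k then -BD n j k else 0)
        + (if (i : ℕ) = k + 1 then BD n j k else 0) := by
    intro k
    simp only [BD]
    split_ifs <;> first | omega | norm_num
  have s1 : ∑ k : Fin (n - 1), (if (i : ℕ) = k then -BD n j k else 0) =
      if h : (i : ℕ) < n - 1 then -BD n j ⟨i, h⟩ else 0 := by
    split_ifs with h
    · rw [Finset.sum_eq_single ⟨i, h⟩]
      · simp
      · intro b _ hb
        rw [if_neg]
        intro h'
        exact hb (Fin.ext h'.symm)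
      · simp
    · exact Finset.sum_eq_zero fun k _ => if_neg (by omega)
  have s2 : ∑ k : Fin (n - 1), (if (i : ℕ) = k + 1 then BD n j k else 0) =
      if h : 0 < (i : ℕ) then BD n j ⟨i - 1, by omega⟩ else 0 := by
    split_ifs with h
    · rw [Finset.sum_eq_single ⟨i - 1, by omega⟩]
      · rw [if_pos]
        simp only
        omega
      · intro b _ hb
        rw [if_neg]
        intro h'
        exact hb (Fin.ext (by simp only; omega))
      · simp
    · exact Finset.sum_eq_zero fun k _ => if_neg (by omega)
  simp only [Matrix.add_apply, Matrix.mul_apply, Matrix.transpose_apply, key,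
    Finset.sum_add_distrib, s1, s2, Matrix.smul_apply, smul_eq_mul]
  simp only [BD, TE, E0, Fin.ext_iff]
  split_ifs <;> first | omega | norm_num

theorem E0_posSemidef (n : ℕ) : (E0 n).PosSemidef := by
  have : E0 n = Matrix.diagonal
      (fun i : Fin n => if (i : ℕ) = 0 ∨ (i : ℕ) = n - 1 then (1 : ℝ) else 0) := by
    ext i j
    simp only [E0, Matrix.diagonal_apply]
    split_ifs <;> first | rfl | tauto
  rw [this]
  refine Matrix.PosSemidef.diagonal fun i => ?_
  simp only [Pi.zero_apply]
  split_ifs <;> norm_num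

/-- Row `i` of `B_D x = 0` reads `x (i - 1) = x i` (with `x (-1) = 0`), so `x` vanishes by
induction on the index. -/
theorem BD_mulVec_injective (n : ℕ) : Function.Injective (BD n).mulVec := by
  have h0 : ∀ x, (BD n).mulVec x = 0 → x = 0 := by
    intro x hx
    have main : ∀ m (h : m < n - 1), x ⟨m, h⟩ = 0 := by
      intro m
      induction m with
      | zero =>
        intro h
        have := congrFun hx ⟨0, by omega⟩
        simp only [Matrix.mulVec, dotProduct, Pi.zero_apply] at this
        rw [Finset.sum_eq_single ⟨0, h⟩] at this
        · simpa [BD] using this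
        · intro b _ hb
          have : (b : ℕ) ≠ 0 := fun h' => hb (Fin.ext h')
          simp [BD, this.symm]
        · simp
      | succ m ih =>
        intro h
        have := congrFun hx ⟨m + 1, by omega⟩
        simp only [Matrix.mulVec, dotProduct, Pi.zero_apply] at this
        rw [Finset.sum_eq_single ⟨m + 1, h⟩] at this
        · simpa [BD] using this
        · intro b _ hb
          have hb' : m + 1 ≠ (b : ℕ) := fun h' => hb (Fin.ext h'.symm)
          by_cases hm : m = (b : ℕ)
          · have : b = ⟨m, by omega⟩ := Fin.ext hm.symm
            rw [this, ih, mul_zero]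
          · simp [BD, hb', hm]
        · simp
    ext k
    exact main k k.2
  intro x y hxy
  rw [← sub_eq_zero]
  exact h0 _ (by rw [Matrix.mulVec_sub]; exact sub_eq_zero.2 hxy)

theorem TD_posDef (n : ℕ) : (TD n).PosDef := by
  rw [← BD_transpose_mul_BD, ← Matrix.conjTranspose_eq_transpose_of_trivial]
  exact Matrix.PosDef.conjTranspose_mul_self _ (BD_mulVec_injective n)

theorem TE_posSemidef (n : ℕ) (hn : 2 ≤ n) : (TE n).PosSemidef := by
  rw [TE_eq n hn, ← Matrix.conjTranspose_eq_transpose_of_trivial]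
  exact (Matrix.posSemidef_self_mul_conjTranspose _).add ((E0_posSemidef n).smul (by norm_num))

theorem fromBlocks_diag_posSemidef {k l : Type*} [Fintype k] [Fintype l] [DecidableEq k]
    [DecidableEq l] {A : Matrix k k ℝ} {D : Matrix l l ℝ} (hA : A.PosSemidef)
    (hD : D.PosSemidef) : (Matrix.fromBlocks A 0 0 D).PosSemidef := by
  refine Matrix.PosSemidef.of_dotProduct_mulVec_nonneg ?_ fun x => ?_
  · exact Matrix.IsHermitian.fromBlocks hA.1 (by simp) hD.1
  · rw [← Sum.elim_comp_inl_inr x, Matrix.fromBlocks_mulVec]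
    have h1 := hA.dotProduct_mulVec_nonneg (x ∘ Sum.inl)
    have h2 := hD.dotProduct_mulVec_nonneg (x ∘ Sum.inr)
    simp only [star_trivial] at h1 h2 ⊢
    rw [sumElim_dotProduct_sumElim]
    simpa using add_nonneg h1 h2

theorem fromBlocks_diag_posDef {k l : Type*} [Fintype k] [Fintype l] [DecidableEq k]
    [DecidableEq l] {A : Matrix k k ℝ} {D : Matrix l l ℝ} (hA : A.PosDef)
    (hD : D.PosDef) : (Matrix.fromBlocks A 0 0 D).PosDef := by
  rw [(fromBlocks_diag_posSemidef hA.posSemidef hD.posSemidef).posDef_iff_isUnit,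
    Matrix.isUnit_fromBlocks_zero₂₁]
  exact ⟨hA.isUnit, hD.isUnit⟩

theorem negL_posDef (n : ℕ) (hn : 2 ≤ n) : (negL n).PosDef :=
  fromBlocks_diag_posDef
    ((Matrix.PosDef.one.kronecker (TD_posDef n)).add_posSemidef
      ((TE_posSemidef n hn).kronecker Matrix.PosSemidef.one))
    (((TD_posDef n).kronecker Matrix.PosDef.one).posSemidef_add
      (Matrix.PosSemidef.one.kronecker (TE_posSemidef n hn)))

/-- The discrete curl `[B_Dᵀ ⊗ I, -I ⊗ B_Dᵀ]`, mapping edge velocities to the `(n-1)²` interior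
grid vertices. -/
noncomputable def discreteCurl (n : ℕ) :
    Matrix (Fin (n - 1) × Fin (n - 1)) ((Fin n × Fin (n - 1)) ⊕ (Fin (n - 1) × Fin n)) ℝ :=
  Matrix.fromCols ((BD n)ᵀ ⊗ₖ (1 : Matrix (Fin (n - 1)) (Fin (n - 1)) ℝ))
    (-((1 : Matrix (Fin (n - 1)) (Fin (n - 1)) ℝ) ⊗ₖ (BD n)ᵀ))

/-- Discrete analogue of `-Δ = -grad div + curl* curl`; the last summand is the correction
coming from the no-slip condition on the tangential velocity. -/
theorem negL_eq (n : ℕ) (hn : 2 ≤ n) :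
    negL n = Gmac n * (Gmac n)ᵀ + (discreteCurl n)ᵀ * discreteCurl n
      + (2 : ℝ) • Matrix.fromBlocks
          (E0 n ⊗ₖ (1 : Matrix (Fin (n - 1)) (Fin (n - 1)) ℝ)) 0 0
          ((1 : Matrix (Fin (n - 1)) (Fin (n - 1)) ℝ) ⊗ₖ E0 n) := by
  rw [negL, Gmac, discreteCurl, Matrix.transpose_fromRows, Matrix.transpose_fromCols,
    Matrix.fromRows_mul_fromCols, Matrix.fromRows_mul_fromCols, Matrix.fromBlocks_smul,
    Matrix.fromBlocks_add, Matrix.fromBlocks_add, TE_eq n hn, ← BD_transpose_mul_BD]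
  simp only [Matrix.transpose_neg, ← Matrix.kroneckerMap_transpose, Matrix.transpose_transpose,
    Matrix.transpose_one, Matrix.neg_mul, Matrix.mul_neg, ← Matrix.mul_kronecker_mul,
    Matrix.one_mul, Matrix.mul_one, neg_neg, Matrix.add_kronecker, Matrix.kronecker_add,
    Matrix.smul_kronecker, Matrix.kronecker_smul, smul_zero, add_zero, add_neg_cancel]
  congr 1
  · abel
  · abel

theorem negL_sub_posSemidef (n : ℕ) (hn : 2 ≤ n) :
    (negL n - Gmac n * (Gmac n)ᵀ).PosSemidef := by
  rw [negL_eq n hn, add_assoc, add_sub_cancel_left,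
    ← Matrix.conjTranspose_eq_transpose_of_trivial (discreteCurl n)]
  exact (Matrix.posSemidef_conjTranspose_mul_self _).add
    ((fromBlocks_diag_posSemidef ((E0_posSemidef n).kronecker Matrix.PosSemidef.one)
      (Matrix.PosSemidef.one.kronecker (E0_posSemidef n))).smul (by norm_num))

/-- If `G Gᵀ ≤ A` in the Loewner order, the eigenvalues of `Gᵀ A⁻¹ G` lie in `[0, 1]`. With
`u = A⁻¹ G p` one has `lam ‖p‖² = uᵀ A u ≥ 0` and `lam² ‖p‖² = ‖Gᵀ u‖² ≤ uᵀ A u`. -/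
theorem eigenvalue_schur_mem {ι κ : Type*} [Fintype ι] [Fintype κ] [DecidableEq ι]
    {A : Matrix ι ι ℝ} {G : Matrix ι κ ℝ} (hA : A.PosDef) (hAG : (A - G * Gᵀ).PosSemidef)
    {lam : ℝ} {p : κ → ℝ} (hp : p ≠ 0) (h : (Gᵀ * A⁻¹ * G).mulVec p = lam • p) :
    0 ≤ lam ∧ lam ≤ 1 := by
  set u := A⁻¹ *ᵥ (G *ᵥ p) with hu
  have hAu : A *ᵥ u = G *ᵥ p := by
    rw [hu, Matrix.mulVec_mulVec, Matrix.mul_nonsing_inv _ hA.det_pos.ne'.isUnit,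
      Matrix.one_mulVec]
  have hGu : Gᵀ *ᵥ u = lam • p := by
    rw [← h, hu, Matrix.mulVec_mulVec, Matrix.mulVec_mulVec, Matrix.mul_assoc]
  have hpp : 0 < p ⬝ᵥ p := by
    have := Matrix.dotProduct_star_self_pos_iff.2 hp
    simpa using this
  have e1 : u ⬝ᵥ (A *ᵥ u) = lam * (p ⬝ᵥ p) := by
    rw [hAu, Matrix.dotProduct_mulVec, ← Matrix.mulVec_transpose, hGu, smul_dotProduct,
      smul_eq_mul]
  have e2 : u ⬝ᵥ ((G * Gᵀ) *ᵥ u) = lam * (lam * (p ⬝ᵥ p)) := by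
    rw [← Matrix.mulVec_mulVec, Matrix.dotProduct_mulVec, ← Matrix.mulVec_transpose, hGu,
      smul_dotProduct, dotProduct_smul, smul_eq_mul, smul_eq_mul]
  have h1 : 0 ≤ u ⬝ᵥ (A *ᵥ u) := by simpa using hA.posSemidef.dotProduct_mulVec_nonneg u
  have h2 : 0 ≤ u ⬝ᵥ ((A - G * Gᵀ) *ᵥ u) := by simpa using hAG.dotProduct_mulVec_nonneg u
  rw [Matrix.sub_mulVec, dotProduct_sub, e1, e2] at h2
  rw [e1] at h1
  have hl : 0 ≤ lam := nonneg_of_mul_nonneg_left h1 hpp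
  refine ⟨hl, ?_⟩
  by_contra! hlt
  nlinarith [mul_pos (mul_pos (zero_lt_one.trans hlt) hpp) (sub_pos.2 hlt)]

/-- `-L` is symmetric positive definite, and every eigenvalue `λ` of the
Schur complement `S = Gᵀ (-L)⁻¹ G` satisfies `0 ≤ λ ≤ 1`. -/
theorem stmt_8 (n : ℕ) (hn : 2 ≤ n) :
    (negL n).PosDef ∧
    ∀ (lam : ℝ) (p : Fin n × Fin n → ℝ), p ≠ 0 →
      ((Gmac n)ᵀ * (negL n)⁻¹ * Gmac n).mulVec p = lam • p →
      0 ≤ lam ∧ lam ≤ 1 :=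
  ⟨negL_posDef n hn, fun _ _ hp h =>
    eigenvalue_schur_mem (negL_posDef n hn) (negL_sub_posSemidef n hn) hp h⟩
end

section
/- Let n ≥ 3 and let −L_P, G_P be the periodic MAC matrices. If λ ∈ ℝ and p ∈ ℝ^{n²} satisfy G_P·p ≠ 0 and λ·(−L_P)·(G_P·p) = G_P·G_Pᵀ·(G_P·p), then λ = 1. In other words, for purely periodic boundary conditions every nontrivial generalized eigenvalue of the pencil (G_P·G_Pᵀ, −L_P) restricted to the range of G_P equals 1, so all the nonzero eigenvalues of the Schur complement are equal to 1. -/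
/-!
With `S` the cyclic shift, `B_P = 1 - S` and `T_P = 2 - S - Sᵀ`. As `S` is orthogonal,
`B_P B_Pᵀ = B_Pᵀ B_P = T_P`. Periodicity thus makes `B_P` normal, and the scalar Laplacian
`G_Pᵀ G_P = I ⊗ T_P + T_P ⊗ I` intertwines with the vector one: `G_P G_Pᵀ G_P = (-L_P) G_P`.
The eigenvalue equation becomes `lam • w = w` with `w = G_P G_Pᵀ G_P p`, and `w ≠ 0`: over the
reals, `G Gᵀ G p = 0` forces `Gᵀ G p = 0` and then `G p = 0`.
-/

open Matrix Kronecker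

/-- `n×n` circulant tridiagonal matrix with `2` on the diagonal, `-1` on the sub/super-diagonal
and in the corners `(1,n)` and `(n,1)`. -/
noncomputable def TP (n : ℕ) : Matrix (Fin n) (Fin n) ℝ := fun i j =>
  if i = j then 2
  else if (i : ℕ) + 1 = (j : ℕ) ∨ (j : ℕ) + 1 = (i : ℕ) ∨
      ((i : ℕ) = 0 ∧ (j : ℕ) = n - 1) ∨ ((i : ℕ) = n - 1 ∧ (j : ℕ) = 0) then -1 else 0

/-- `n×n` circulant matrix with `1` on the diagonal, `-1` on the super-diagonal and in the
corner `(n,1)`. -/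
noncomputable def BP (n : ℕ) : Matrix (Fin n) (Fin n) ℝ := fun i j =>
  if i = j then 1
  else if (i : ℕ) + 1 = (j : ℕ) ∨ ((i : ℕ) = n - 1 ∧ (j : ℕ) = 0) then -1 else 0

/-- Discrete negative vector Laplacian of the periodic MAC discretization (`h = 1`, `μ = 1`). -/
noncomputable def negLP (n : ℕ) :
    Matrix ((Fin n × Fin n) ⊕ (Fin n × Fin n)) ((Fin n × Fin n) ⊕ (Fin n × Fin n)) ℝ :=
  Matrix.fromBlocks
    ((1 : Matrix (Fin n) (Fin n) ℝ) ⊗ₖ TP n + TP n ⊗ₖ (1 : Matrix (Fin n) (Fin n) ℝ))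
    0 0
    ((1 : Matrix (Fin n) (Fin n) ℝ) ⊗ₖ TP n + TP n ⊗ₖ (1 : Matrix (Fin n) (Fin n) ℝ))

/-- Discrete gradient of the periodic MAC discretization: `I_n ⊗ B_Pᵀ` stacked on top of
`B_Pᵀ ⊗ I_n`. -/
noncomputable def GPmac (n : ℕ) :
    Matrix ((Fin n × Fin n) ⊕ (Fin n × Fin n)) (Fin n × Fin n) ℝ :=
  Matrix.fromRows ((1 : Matrix (Fin n) (Fin n) ℝ) ⊗ₖ (BP n)ᵀ)
    ((BP n)ᵀ ⊗ₖ (1 : Matrix (Fin n) (Fin n) ℝ))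


/-- The cyclic shift matrix on `ℤ/(m+3)`, with entry `1` at each position `(i, i + 1)`. -/
noncomputable def shiftMat (m : ℕ) : Matrix (Fin (m + 3)) (Fin (m + 3)) ℝ :=
  (Equiv.addRight (1 : Fin (m + 3))).permMatrix ℝ

lemma shiftMat_apply (m : ℕ) (i j : Fin (m + 3)) :
    shiftMat m i j = if i + 1 = j then 1 else 0 := by
  simp [shiftMat, PEquiv.toMatrix_apply, Equiv.toPEquiv_apply, eq_comm]

lemma shiftMat_mul_transpose (m : ℕ) : shiftMat m * (shiftMat m)ᵀ = 1 := by
  rw [shiftMat, ← PEquiv.toMatrix_symm, ← Equiv.toPEquiv_symm, ← PEquiv.toMatrix_trans,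
    ← Equiv.toPEquiv_trans, Equiv.self_trans_symm, Equiv.toPEquiv_refl, PEquiv.toMatrix_refl]

lemma fin_add_one_eq_iff (m : ℕ) (i j : Fin (m + 3)) :
    i + 1 = j ↔ ((i : ℕ) + 1 = j ∨ ((i : ℕ) = m + 3 - 1 ∧ (j : ℕ) = 0)) := by
  rw [Fin.ext_iff, Fin.val_add_one]
  have := i.isLt
  have := j.isLt
  split_ifs with h
  · rw [Fin.ext_iff, Fin.val_last] at h
    omega
  · rw [Fin.ext_iff, Fin.val_last] at h
    omega

lemma BP_eq (m : ℕ) : BP (m + 3) = 1 - shiftMat m := by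
  ext i j
  rw [Matrix.sub_apply, shiftMat_apply, Matrix.one_apply]
  simp only [BP, fin_add_one_eq_iff, Fin.ext_iff (a := i) (b := j)]
  split_ifs <;> first | omega | norm_num

/-- This needs `3 ≤ n`: for `n = 2` the positions `(i, i + 1)` and `(i + 1, i)` coincide modulo
`n`, so the off-diagonal entries of the right-hand side would be `-2`. -/
lemma TP_eq (m : ℕ) : TP (m + 3) = 2 • 1 - shiftMat m - (shiftMat m)ᵀ := by
  ext i j
  rw [Matrix.sub_apply, Matrix.sub_apply, Matrix.transpose_apply, shiftMat_apply, shiftMat_apply,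
    Matrix.smul_apply, Matrix.one_apply]
  simp only [TP, fin_add_one_eq_iff, Fin.ext_iff (a := i) (b := j)]
  split_ifs <;> first | omega | norm_num

lemma BP_mul_transpose (m : ℕ) : BP (m + 3) * (BP (m + 3))ᵀ = TP (m + 3) := by
  rw [BP_eq, TP_eq, Matrix.transpose_sub, Matrix.transpose_one, Matrix.sub_mul, Matrix.mul_sub,
    Matrix.mul_sub, shiftMat_mul_transpose]
  simp only [Matrix.one_mul, Matrix.mul_one]
  abel

lemma BP_transpose_mul (m : ℕ) : (BP (m + 3))ᵀ * BP (m + 3) = TP (m + 3) := by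
  rw [BP_eq, TP_eq, Matrix.transpose_sub, Matrix.transpose_one, Matrix.sub_mul, Matrix.mul_sub,
    Matrix.mul_sub, mul_eq_one_comm.mp (shiftMat_mul_transpose m)]
  simp only [Matrix.one_mul, Matrix.mul_one]
  abel

/-- `T_P` and `B_Pᵀ` commute, because `B_P` is normal. -/
lemma TP_mul_BP_transpose (m : ℕ) :
    TP (m + 3) * (BP (m + 3))ᵀ = (BP (m + 3))ᵀ * TP (m + 3) := by
  conv_lhs => rw [← BP_transpose_mul]
  rw [Matrix.mul_assoc, BP_mul_transpose]

lemma GPmac_transpose_mul (m : ℕ) :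
    (GPmac (m + 3))ᵀ * GPmac (m + 3) = 1 ⊗ₖ TP (m + 3) + TP (m + 3) ⊗ₖ 1 := by
  rw [GPmac, Matrix.transpose_fromRows, Matrix.fromCols_mul_fromRows]
  simp only [← Matrix.kroneckerMap_transpose, Matrix.transpose_transpose, Matrix.transpose_one,
    ← Matrix.mul_kronecker_mul, Matrix.one_mul, BP_mul_transpose]

/-- The discrete gradient intertwines the scalar and vector Laplacians. -/
lemma negLP_mul_GPmac (m : ℕ) :
    negLP (m + 3) * GPmac (m + 3) =
      GPmac (m + 3) * (GPmac (m + 3))ᵀ * GPmac (m + 3) := by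
  rw [Matrix.mul_assoc, GPmac_transpose_mul, GPmac, negLP, Matrix.fromBlocks_mul_fromRows,
    Matrix.fromRows_mul]
  simp only [Matrix.zero_mul, add_zero, zero_add, Matrix.add_mul, Matrix.mul_add,
    ← Matrix.mul_kronecker_mul, Matrix.one_mul, Matrix.mul_one, TP_mul_BP_transpose]

/-- for purely periodic boundary conditions, every nontrivial generalized
eigenvalue of the pencil `(G_P G_Pᵀ, -L_P)` restricted to the range of `G_P` equals `1`;
i.e. all the nonzero eigenvalues of the Schur complement are equal to `1`. -/
theorem stmt_15 (n : ℕ) (hn : 3 ≤ n) (lam : ℝ) (p : Fin n × Fin n → ℝ)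
    (hGp : (GPmac n).mulVec p ≠ 0)
    (heig : lam • (negLP n).mulVec ((GPmac n).mulVec p) =
      (GPmac n * (GPmac n)ᵀ).mulVec ((GPmac n).mulVec p)) :
    lam = 1 := by
  obtain ⟨m, rfl⟩ : ∃ m, n = m + 3 := ⟨n - 3, by omega⟩
  rw [Matrix.mulVec_mulVec, Matrix.mulVec_mulVec, negLP_mul_GPmac] at heig
  have hw : (GPmac (m + 3) * (GPmac (m + 3))ᵀ * GPmac (m + 3)) *ᵥ p ≠ 0 := by
    intro h
    apply hGp
    rw [← Matrix.mulVec_mulVec, ← Matrix.conjTranspose_eq_transpose_of_trivial,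
      Matrix.self_mul_conjTranspose_mulVec_eq_zero, Matrix.mulVec_mulVec,
      Matrix.conjTranspose_mul_self_mulVec_eq_zero] at h
    exact h
  exact smul_left_injective ℝ hw (by simpa using heig)
end
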